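/- Let 𝒢 be a graph of groups based on a finite graph G with countable vertex groups Γ_v and amenable edge groups Γ_e, and let Γ = π₁(𝒢). Let S_𝒢 = (Γ × V(G)) ⊔ ⨆_{e ∈ Ē(G)} Γ/Γ_e with the natural Γ-action, and for each vertex v let S_v = Γ_v ⊔ ⨆_{t(e)=v} Γ_v/Γ_e with the Γ_v-action by left multiplication, and let φ_v^• : ℓ^∞_alt(S_𝒢^{•+1}) → ℓ^∞_alt(S_v^{•+1}) be the pullback along the natural inclusion φ_v : S_v → S_𝒢. Then for every n ≥ 2 there exists a norm non-increasing chain map ψ^n : ⊕_{v∈V(G)} ℓ^∞_alt(S_v^{n+1})^{Γ_v} → ℓ^∞_alt(S_𝒢^{n+1})^Γ, defined in all degrees n ≥ 2 and commuting with the coboundaries there, such that the composition φ^n ∘ ψ^n, where φ^n = ⊕_{v∈V(G)} φ_v^n, is the identity of ⊕_{v∈V(G)} ℓ^∞_alt(S_v^{n+1})^{Γ_v}. -/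

import Mathlib

noncomputable section

namespace GrpBC

/-- The sup-"norm" of a real valued function (the infimum of its bounds). -/
def supN {S : Type*} (f : S → ℝ) : ℝ := sInf {C : ℝ | 0 ≤ C ∧ ∀ s, |f s| ≤ C}

/-- A group is amenable if it admits a left-invariant finitely additive
probability measure defined on all subsets. -/
def IsAmenable (G : Type*) [Group G] : Prop :=
  ∃ m : Set G → ℝ, (∀ A, 0 ≤ m A) ∧ m Set.univ = 1 ∧
    (∀ A B, Disjoint A B → m (A ∪ B) = m A + m B) ∧
    (∀ (g : G) (A : Set G), m ((g * ·) '' A) = m A)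

/-- An amenable `Γ`-set: a (nonempty) set on which `Γ` acts with amenable stabilizers. -/
def IsAmenableAction (Γ : Type*) [Group Γ] (S : Type*) [MulAction Γ S] : Prop :=
  Nonempty S ∧ ∀ s : S, IsAmenable (MulAction.stabilizer Γ s)

/-- The homogeneous coboundary operator on functions on `S^{n+1}`. -/
def gcob (S : Type*) (n : ℕ) : ((Fin (n + 1) → S) → ℝ) →ₗ[ℝ] ((Fin (n + 2) → S) → ℝ) where
  toFun f := fun g => ∑ i : Fin (n + 2), ((-1 : ℝ) ^ (i : ℕ)) * f (g ∘ i.succAbove)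
  map_add' f g := by
    funext τ
    simp [mul_add, Finset.sum_add_distrib]
  map_smul' r f := by
    funext τ
    simp [Finset.mul_sum]
    congr 1
    funext i
    ring

/-- Bounded functions on `S^{n+1}` (the module `ℓ^∞(S^{n+1})`). -/
def bddF (S : Type*) (n : ℕ) : Submodule ℝ ((Fin (n + 1) → S) → ℝ) where
  carrier := {f | ∃ C, ∀ g, |f g| ≤ C}
  zero_mem' := ⟨0, fun g => by simp⟩
  add_mem' := by
    rintro f g ⟨C, hC⟩ ⟨D, hD⟩
    exact ⟨C + D, fun τ => (abs_add_le _ _).trans (add_le_add (hC τ) (hD τ))⟩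
  smul_mem' := by
    rintro r f ⟨C, hC⟩
    refine ⟨|r| * C, fun τ => ?_⟩
    calc |(r • f) τ| = |r| * |f τ| := by rw [Pi.smul_apply, smul_eq_mul, abs_mul]
    _ ≤ |r| * C := mul_le_mul_of_nonneg_left (hC τ) (abs_nonneg r)

/-- Alternating functions on `S^{n+1}`: they transform under permutations of the arguments
according to the sign of the permutation. -/
def altF (S : Type*) (n : ℕ) : Submodule ℝ ((Fin (n + 1) → S) → ℝ) where
  carrier := {f | ∀ (g : Fin (n + 1) → S) (π : Equiv.Perm (Fin (n + 1))),
    f (g ∘ π) = ((Equiv.Perm.sign π : ℤ) : ℝ) * f g}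
  zero_mem' := fun g π => by simp
  add_mem' := by
    intro f g hf hg τ π
    simp only [Pi.add_apply, hf τ π, hg τ π]
    ring
  smul_mem' := by
    intro r f hf τ π
    simp only [Pi.smul_apply, hf τ π, smul_eq_mul]
    ring

/-- `Γ`-invariant functions on `S^{n+1}` (for the diagonal action). -/
def invF (Γ : Type*) [Group Γ] (S : Type*) [MulAction Γ S] (n : ℕ) :
    Submodule ℝ ((Fin (n + 1) → S) → ℝ) where
  carrier := {f | ∀ (γ : Γ) (g : Fin (n + 1) → S), f (fun i => γ • g i) = f g}
  zero_mem' := fun γ g => rfl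
  add_mem' := by
    intro f g hf hg γ τ
    simp [Pi.add_apply, hf γ τ, hg γ τ]
  smul_mem' := by
    intro r f hf γ τ
    simp [Pi.smul_apply, hf γ τ]

variable (Γ : Type*) [Group Γ]

/-- Invariant bounded cochains of the homogeneous resolution of `Γ`. -/
def grpC (n : ℕ) : Submodule ℝ ((Fin (n + 1) → Γ) → ℝ) := bddF Γ n ⊓ invF Γ Γ n

/-- Invariant bounded cocycles. -/
def grpZ (n : ℕ) : Submodule ℝ ((Fin (n + 1) → Γ) → ℝ) :=
  grpC Γ n ⊓ LinearMap.ker (gcob Γ n)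

/-- Invariant bounded coboundaries. -/
def grpB : ∀ n : ℕ, Submodule ℝ ((Fin (n + 1) → Γ) → ℝ)
  | 0 => ⊥
  | (m + 1) => (grpC Γ m).map (gcob Γ m)

/-- The bounded cohomology `H_b^n(Γ)` of `Γ` with trivial real coefficients. -/
def Hb (n : ℕ) := grpZ Γ n ⧸ ((grpB Γ n).comap (grpZ Γ n).subtype)

instance (n : ℕ) : AddCommGroup (Hb Γ n) := Submodule.Quotient.addCommGroup _
instance (n : ℕ) : Module ℝ (Hb Γ n) := Submodule.Quotient.module _

variable {Γ}

/-- The class of an invariant bounded cocycle in bounded cohomology. -/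
def HbClass {n : ℕ} (f : grpZ Γ n) : Hb Γ n := Submodule.Quotient.mk f

/-- The canonical `ℓ^∞`-seminorm on bounded cohomology. -/
def hbNorm {n : ℕ} (φ : Hb Γ n) : ℝ :=
  sInf {r : ℝ | ∃ f : grpZ Γ n, HbClass f = φ ∧ r = supN f.1}

/-! ### Restriction maps -/

variable {Γ₁ : Type*} [Group Γ₁]

/-- Pullback of homogeneous cochains along a group homomorphism. -/
def pbG (φ : Γ₁ →* Γ) (n : ℕ) : ((Fin (n + 1) → Γ) → ℝ) →ₗ[ℝ] ((Fin (n + 1) → Γ₁) → ℝ) where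
  toFun f := fun g => f (fun i => φ (g i))
  map_add' f g := rfl
  map_smul' r f := rfl

lemma pbG_mem_grpZ (φ : Γ₁ →* Γ) (n : ℕ) {f : (Fin (n + 1) → Γ) → ℝ}
    (hf : f ∈ grpZ Γ n) : pbG φ n f ∈ grpZ Γ₁ n := by
  obtain ⟨⟨⟨C, hC⟩, hinv⟩, hker⟩ := hf
  refine ⟨⟨⟨C, fun g => hC _⟩, fun γ g => ?_⟩, ?_⟩
  · show f (fun i => φ (γ * g i)) = f (fun i => φ (g i))
    have : (fun i => φ (γ * g i)) = fun i => φ γ • φ (g i) := by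
      funext i
      simp [smul_eq_mul]
    rw [this]
    exact hinv (φ γ) (fun i => φ (g i))
  · have h0 : gcob Γ n f = 0 := hker
    show gcob Γ₁ n (pbG φ n f) = 0
    funext g
    have : gcob Γ₁ n (pbG φ n f) g = gcob Γ n f (fun i => φ (g i)) := by
      show (∑ i : Fin (n + 2), ((-1 : ℝ) ^ (i : ℕ)) * f (fun j => φ ((g ∘ i.succAbove) j)))
        = ∑ i : Fin (n + 2), ((-1 : ℝ) ^ (i : ℕ)) * f ((fun j => φ (g j)) ∘ i.succAbove)
      rfl
    rw [this, h0]
    rfl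

lemma pbG_mem_grpB (φ : Γ₁ →* Γ) (n : ℕ) {f : (Fin (n + 1) → Γ) → ℝ}
    (hf : f ∈ grpB Γ n) : pbG φ n f ∈ grpB Γ₁ n := by
  cases n with
  | zero =>
    have : f = 0 := hf
    simp [this, grpB]
  | succ m =>
    obtain ⟨u, ⟨⟨C, hC⟩, hinv⟩, rfl⟩ := hf
    refine ⟨pbG φ m u, ⟨⟨C, fun g => hC _⟩, fun γ g => ?_⟩, ?_⟩
    · show u (fun i => φ (γ * g i)) = u (fun i => φ (g i))
      have : (fun i => φ (γ * g i)) = fun i => φ γ • φ (g i) := by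
        funext i
        simp [smul_eq_mul]
      rw [this]
      exact hinv (φ γ) (fun i => φ (g i))
    · rfl

/-- The restriction map `H_b^n(Γ) → H_b^n(Γ₁)` induced by a group homomorphism
`Γ₁ → Γ`. -/
def hbRes (φ : Γ₁ →* Γ) (n : ℕ) : Hb Γ n →ₗ[ℝ] Hb Γ₁ n :=
  Submodule.mapQ _ _ ((pbG φ n).restrict (fun f hf => pbG_mem_grpZ φ n hf))
    (fun f hf => pbG_mem_grpB φ n hf)



/-! ### The complex of alternating bounded functions on a `Γ`-set -/

variable (Γ : Type*) [Group Γ] (S : Type*) [MulAction Γ S]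

/-- Invariant alternating bounded cochains on `S^{n+1}`:
`ℓ^∞_alt(S^{n+1})^Γ`. -/
def altC (n : ℕ) : Submodule ℝ ((Fin (n + 1) → S) → ℝ) :=
  (bddF S n ⊓ altF S n) ⊓ invF Γ S n

/-- Invariant alternating bounded cocycles `Zℓ^∞_alt(S^{n+1})^Γ`. -/
def ZS (n : ℕ) : Submodule ℝ ((Fin (n + 1) → S) → ℝ) :=
  altC Γ S n ⊓ LinearMap.ker (gcob S n)

/-- Coboundaries in the invariant alternating bounded complex. -/
def BS : ∀ n : ℕ, Submodule ℝ ((Fin (n + 1) → S) → ℝ)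
  | 0 => ⊥
  | (m + 1) => (altC Γ S m).map (gcob S m)

/-- The cohomology of the complex `ℓ^∞_alt(S^{•+1})^Γ`. -/
def HS (n : ℕ) := ZS Γ S n ⧸ ((BS Γ S n).comap (ZS Γ S n).subtype)

instance (n : ℕ) : AddCommGroup (HS Γ S n) := Submodule.Quotient.addCommGroup _
instance (n : ℕ) : Module ℝ (HS Γ S n) := Submodule.Quotient.module _

variable {Γ S}

/-- The class of a cocycle in the cohomology of `ℓ^∞_alt(S^{•+1})^Γ`. -/
def HSClass {n : ℕ} (f : ZS Γ S n) : HS Γ S n := Submodule.Quotient.mk f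

/-- The `ℓ^∞`-seminorm on the cohomology of `ℓ^∞_alt(S^{•+1})^Γ`. -/
def hsNorm {n : ℕ} (φ : HS Γ S n) : ℝ :=
  sInf {r : ℝ | ∃ f : ZS Γ S n, HSClass f = φ ∧ r = supN f.1}

/-- Pullback of cochains along the orbit map `g ↦ g • s₀`. -/
def pbOrb (s₀ : S) (n : ℕ) : ((Fin (n + 1) → S) → ℝ) →ₗ[ℝ] ((Fin (n + 1) → Γ) → ℝ) where
  toFun f := fun g => f (fun i => g i • s₀)
  map_add' f g := rfl
  map_smul' r f := rfl

lemma pbOrb_mem_grpZ (s₀ : S) (n : ℕ) {f : (Fin (n + 1) → S) → ℝ}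
    (hf : f ∈ ZS Γ S n) : pbOrb (Γ := Γ) s₀ n f ∈ grpZ Γ n := by
  obtain ⟨⟨⟨⟨C, hC⟩, -⟩, hinv⟩, hker⟩ := hf
  refine ⟨⟨⟨C, fun g => hC _⟩, fun γ g => ?_⟩, ?_⟩
  · show f (fun i => (γ * g i) • s₀) = f (fun i => g i • s₀)
    have : (fun i => (γ * g i) • s₀) = fun i => γ • (g i • s₀) := by
      funext i
      rw [mul_smul]
    rw [this]
    exact hinv γ (fun i => g i • s₀)
  · have h0 : gcob S n f = 0 := hker
    show gcob Γ n (pbOrb (Γ := Γ) s₀ n f) = 0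
    funext g
    have : gcob Γ n (pbOrb (Γ := Γ) s₀ n f) g = gcob S n f (fun i => g i • s₀) := rfl
    rw [this, h0]
    rfl

lemma pbOrb_mem_grpB (s₀ : S) (n : ℕ) {f : (Fin (n + 1) → S) → ℝ}
    (hf : f ∈ BS Γ S n) : pbOrb (Γ := Γ) s₀ n f ∈ grpB Γ n := by
  cases n with
  | zero =>
    have : f = 0 := hf
    simp [this, grpB]
  | succ m =>
    obtain ⟨u, ⟨⟨⟨C, hC⟩, -⟩, hinv⟩, rfl⟩ := hf
    refine ⟨pbOrb (Γ := Γ) s₀ m u, ⟨⟨C, fun g => hC _⟩, fun γ g => ?_⟩, ?_⟩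
    · show u (fun i => (γ * g i) • s₀) = u (fun i => g i • s₀)
      have : (fun i => (γ * g i) • s₀) = fun i => γ • (g i • s₀) := by
        funext i
        rw [mul_smul]
      rw [this]
      exact hinv γ (fun i => g i • s₀)
    · rfl

/-- The canonical map `Zℓ^∞_alt(S^{•+1})^Γ → H_b^•(Γ)` (realized by pulling back along
the orbit map of a point `s₀ ∈ S`; for an amenable action the induced map does not depend
on this choice). -/
def canHb (s₀ : S) (n : ℕ) (f : ZS Γ S n) : Hb Γ n :=
  HbClass ⟨pbOrb (Γ := Γ) s₀ n f.1, pbOrb_mem_grpZ s₀ n f.2⟩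

/-- The map `HS → H_b` induced in cohomology by pulling back along an orbit map. -/
def hsToHb (s₀ : S) (n : ℕ) : HS Γ S n →ₗ[ℝ] Hb Γ n :=
  Submodule.mapQ _ _ ((pbOrb (Γ := Γ) s₀ n).restrict (fun f hf => pbOrb_mem_grpZ s₀ n hf))
    (fun f hf => pbOrb_mem_grpB s₀ n hf)

/-! ### Graphs of groups and their fundamental groups (Serre) -/

/-- A graph in the sense of Serre: oriented edges with a fixed-point free involution. -/
structure SerreGraph where
  V : Type
  E : Type
  bar : E → E
  t : E → V
  bar_bar : ∀ e, bar (bar e) = e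
  bar_ne : ∀ e, bar e ≠ e

namespace SerreGraph

/-- The origin of an edge. -/
def o (G : SerreGraph) (e : G.E) : G.V := G.t (G.bar e)

/-- `IsWalk p v w` : `p` is a walk of (oriented) edges from `v` to `w`. -/
def IsWalk (G : SerreGraph) : List G.E → G.V → G.V → Prop
  | [], v, w => v = w
  | e :: p, v, w => G.o e = v ∧ G.IsWalk p (G.t e) w

/-- A walk is reduced if it has no backtracking. -/
def Reduced (G : SerreGraph) (p : List G.E) : Prop :=
  p.Chain' (fun e f => f ≠ G.bar e)

/-- A spanning tree of a graph: a symmetric set of edges connecting all the vertices and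
containing no nontrivial reduced loop. -/
def IsSpanningTree (G : SerreGraph) (T : Set G.E) : Prop :=
  (∀ e ∈ T, G.bar e ∈ T) ∧
  (∀ v w : G.V, ∃ p : List G.E, (∀ e ∈ p, e ∈ T) ∧ G.IsWalk p v w) ∧
  (∀ (v : G.V) (p : List G.E), p ≠ [] → (∀ e ∈ p, e ∈ T) → G.IsWalk p v v → ¬ G.Reduced p)

end SerreGraph

/-- A graph of groups on a graph `G`: vertex groups, edge groups (with the identification
`Γ_e = Γ_{ē}` given by the isomorphisms `barEquiv`) and injective structure morphisms
`h_e : Γ_e → Γ_{t(e)}`. -/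
structure GraphOfGroups (G : SerreGraph) where
  Gv : G.V → Type
  grpV : ∀ v, Group (Gv v)
  Ge : G.E → Type
  grpE : ∀ e, Group (Ge e)
  barEquiv : ∀ e, Ge e ≃* Ge (G.bar e)
  barEquiv_coh : ∀ (e : G.E) (a : Ge e), HEq (barEquiv (G.bar e) (barEquiv e a)) a
  h : ∀ e, Ge e →* Gv (G.t e)
  h_inj : ∀ e, Function.Injective (h e)

attribute [instance] GraphOfGroups.grpV GraphOfGroups.grpE

namespace GraphOfGroups

variable {G : SerreGraph} (𝒢 : GraphOfGroups G)

/-- The generators of the fundamental group of a graph of groups: the elements of the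
vertex groups together with the edges of the graph. -/
abbrev gens : Type := ((v : G.V) × 𝒢.Gv v) ⊕ G.E

/-- The relations defining the fundamental group of a graph of groups with respect to a
spanning tree `T`: multiplication in each vertex group; `ē = e⁻¹`;
`e (h_{ē}(ā)) e⁻¹ = h_e(a)` for every edge `e` and `a ∈ Γ_e`; and `e = 1` for `e ∈ T`. -/
def rels (T : Set G.E) : Set (FreeGroup 𝒢.gens) :=
  {w | (∃ (v : G.V) (g h' : 𝒢.Gv v),
          w = FreeGroup.of (Sum.inl ⟨v, g⟩) * FreeGroup.of (Sum.inl ⟨v, h'⟩) *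
            (FreeGroup.of (Sum.inl ⟨v, g * h'⟩))⁻¹) ∨
       (∃ e : G.E, w = FreeGroup.of (Sum.inr e) * FreeGroup.of (Sum.inr (G.bar e))) ∨
       (∃ (e : G.E) (a : 𝒢.Ge e),
          w = FreeGroup.of (Sum.inr e) *
            FreeGroup.of (Sum.inl ⟨G.t (G.bar e), 𝒢.h (G.bar e) (𝒢.barEquiv e a)⟩) *
            (FreeGroup.of (Sum.inr e))⁻¹ * (FreeGroup.of (Sum.inl ⟨G.t e, 𝒢.h e a⟩))⁻¹) ∨
       (∃ e ∈ T, w = FreeGroup.of (Sum.inr e))}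

/-- The fundamental group of a graph of groups with respect to a spanning tree `T`
(Serre). -/
def pi1 (T : Set G.E) : Type := PresentedGroup (𝒢.rels T)

instance (T : Set G.E) : Group (𝒢.pi1 T) := by unfold pi1; infer_instance

lemma mk_rel_one {T : Set G.E} {r : FreeGroup 𝒢.gens} (hr : r ∈ 𝒢.rels T) :
    PresentedGroup.mk (𝒢.rels T) r = 1 :=
  (QuotientGroup.eq_one_iff r).2 (Subgroup.subset_normalClosure hr)

/-- The canonical inclusion of a vertex group into the fundamental group of a graph of
groups. -/
def vtxIncl (T : Set G.E) (v : G.V) : 𝒢.Gv v →* 𝒢.pi1 T :=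
  MonoidHom.mk' (fun g => (PresentedGroup.of (rels := 𝒢.rels T) (Sum.inl ⟨v, g⟩))) (by
    intro g h'
    have hr : (FreeGroup.of (Sum.inl ⟨v, g⟩) * FreeGroup.of (Sum.inl ⟨v, h'⟩) *
        (FreeGroup.of (Sum.inl (⟨v, g * h'⟩ : (v : G.V) × 𝒢.Gv v)))⁻¹) ∈ 𝒢.rels T :=
      Or.inl ⟨v, g, h', rfl⟩
    have h1 := 𝒢.mk_rel_one hr
    rw [map_mul, map_mul, map_inv] at h1
    exact (mul_inv_eq_one.mp h1).symm)

/-- The image in the fundamental group of an edge of the graph. -/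
def edgeElt (T : Set G.E) (e : G.E) : 𝒢.pi1 T :=
  PresentedGroup.of (rels := 𝒢.rels T) (Sum.inr e)

end GraphOfGroups

/-! ### The Bass–Serre amenable spaces attached to a graph of groups -/

namespace GraphOfGroups

variable {G : SerreGraph} (𝒢 : GraphOfGroups G) (T : Set G.E)

/-- Transport between vertex groups along an equality of vertices. -/
def castV {v w : G.V} (h : v = w) : 𝒢.Gv v ≃* 𝒢.Gv w := by subst h; exact MulEquiv.refl _

/-- The inclusion of an edge group into the fundamental group, through the terminal
vertex group. -/
def edgeHom (e : G.E) : 𝒢.Ge e →* 𝒢.pi1 T := (𝒢.vtxIncl T (G.t e)).comp (𝒢.h e)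

/-- The edge subgroup `Γ_e ≤ Γ`. -/
def edgeSubgroupΓ (e : G.E) : Subgroup (𝒢.pi1 T) := (𝒢.edgeHom T e).range

/-- An orientation of a graph: a choice of one edge in each geometric edge. -/
def _root_.GrpBC.SerreGraph.IsOrientation (G : SerreGraph) (O : Set G.E) : Prop :=
  ∀ e, e ∈ O ↔ G.bar e ∉ O

/-- The amenable `Γ`-space `S_𝒢 = (Γ × V(G)) ⊔ ⨆_{e ∈ Ē(G)} Γ/Γ_e`, where the geometric
edges are realized through an orientation `O`. -/
abbrev SG (O : Set G.E) : Type :=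
  (𝒢.pi1 T × G.V) ⊕ ((e : {e : G.E // e ∈ O}) × (𝒢.pi1 T ⧸ 𝒢.edgeSubgroupΓ T e.1))

instance (O : Set G.E) : SMul (𝒢.pi1 T) (𝒢.SG T O) :=
  ⟨fun g s => match s with
    | Sum.inl (x, v) => Sum.inl (g * x, v)
    | Sum.inr ⟨e, x⟩ => Sum.inr ⟨e, g • x⟩⟩

instance (O : Set G.E) : MulAction (𝒢.pi1 T) (𝒢.SG T O) where
  one_smul := by
    rintro (⟨x, v⟩ | ⟨e, x⟩)
    · show (Sum.inl ((1 : 𝒢.pi1 T) * x, v) : 𝒢.SG T O) = Sum.inl (x, v)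
      rw [one_mul]
    · show (Sum.inr ⟨e, (1 : 𝒢.pi1 T) • x⟩ : 𝒢.SG T O) = Sum.inr ⟨e, x⟩
      rw [one_smul]
  mul_smul := by
    intro g h s
    rcases s with ⟨x, v⟩ | ⟨e, x⟩
    · show (Sum.inl (g * h * x, v) : 𝒢.SG T O) = Sum.inl (g * (h * x), v)
      rw [mul_assoc]
    · show (Sum.inr ⟨e, (g * h) • x⟩ : 𝒢.SG T O) = Sum.inr ⟨e, g • h • x⟩
      rw [mul_smul]

/-- The subgroup `Γ_e ≤ Γ_v` for an edge `e` with terminal vertex `v`. -/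
def SvSubgroup (v : G.V) (e : {e : G.E // G.t e = v}) : Subgroup (𝒢.Gv v) :=
  ((𝒢.h e.1).range).comap (𝒢.castV e.2.symm).toMonoidHom

/-- The amenable `Γ_v`-space `S_v = Γ_v ⊔ ⨆_{t(e) = v} Γ_v/Γ_e`. -/
abbrev Sv (v : G.V) : Type :=
  𝒢.Gv v ⊕ ((e : {e : G.E // G.t e = v}) × (𝒢.Gv v ⧸ 𝒢.SvSubgroup v e))

instance (v : G.V) : SMul (𝒢.Gv v) (𝒢.Sv v) :=
  ⟨fun g s => match s with
    | Sum.inl x => Sum.inl (g * x)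
    | Sum.inr ⟨e, x⟩ => Sum.inr ⟨e, g • x⟩⟩

instance (v : G.V) : MulAction (𝒢.Gv v) (𝒢.Sv v) where
  one_smul := by
    rintro (x | ⟨e, x⟩)
    · show (Sum.inl ((1 : 𝒢.Gv v) * x) : 𝒢.Sv v) = Sum.inl x
      rw [one_mul]
    · show (Sum.inr ⟨e, (1 : 𝒢.Gv v) • x⟩ : 𝒢.Sv v) = Sum.inr ⟨e, x⟩
      rw [one_smul]
  mul_smul := by
    intro g h s
    rcases s with x | ⟨e, x⟩
    · show (Sum.inl (g * h * x) : 𝒢.Sv v) = Sum.inl (g * (h * x))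
      rw [mul_assoc]
    · show (Sum.inr ⟨e, (g * h) • x⟩ : 𝒢.Sv v) = Sum.inr ⟨e, g • h • x⟩
      rw [mul_smul]

attribute [local instance] Classical.propDecidable

/-- The inclusion `φ_v : S_v → S_𝒢`, sending `g ∈ Γ_v` to `(i_v(g), v)` and the coset
`gΓ_e` to the coset `i_v(g)Γ_e` (suitably translated by the edge generator when `e`
does not belong to the chosen orientation). -/
def phiV (O : Set G.E) (hO : G.IsOrientation O) (v : G.V) (s : 𝒢.Sv v) : 𝒢.SG T O :=
  match s with
  | Sum.inl g => Sum.inl (𝒢.vtxIncl T v g, v)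
  | Sum.inr ⟨e, x⟩ =>
      if he : e.1 ∈ O then
        Sum.inr ⟨⟨e.1, he⟩,
          QuotientGroup.mk (𝒢.vtxIncl T v (Quotient.out x))⟩
      else
        Sum.inr ⟨⟨G.bar e.1, by
            have h1 := hO (G.bar e.1)
            rw [G.bar_bar e.1] at h1
            exact h1.mpr he⟩,
          QuotientGroup.mk (𝒢.vtxIncl T v (Quotient.out x) * 𝒢.edgeElt T e.1)⟩

end GraphOfGroups

/-- Pullback of cochains along a map of sets. -/
def pbSet {S₁ S : Type*} (φ : S₁ → S) (n : ℕ) :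
    ((Fin (n + 1) → S) → ℝ) →ₗ[ℝ] ((Fin (n + 1) → S₁) → ℝ) where
  toFun f := fun x => f (fun j => φ (x j))
  map_add' f g := rfl
  map_smul' r f := rfl


section Helpers
open GraphOfGroups

/-! ### Alternating functions -/

lemma alt_zero_of_eq {Z : Type*} {n : ℕ} {f : (Fin (n + 1) → Z) → ℝ} (hf : f ∈ altF Z n)
    {y : Fin (n + 1) → Z} {i j : Fin (n + 1)} (hy : y i = y j) (hij : i ≠ j) : f y = 0 := by
  have h := hf y (Equiv.swap i j)
  have h2 : y ∘ (Equiv.swap i j) = y := by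
    funext k
    simp only [Function.comp_apply, Equiv.swap_apply_def]
    split_ifs with h1 h2
    · rw [h1, hy]
    · rw [h2, hy]
    · rfl
  rw [h2, Equiv.Perm.sign_swap hij] at h
  simp at h
  linarith

lemma alt_zero_of_not_inj {Z : Type*} {n : ℕ} {f : (Fin (n + 1) → Z) → ℝ} (hf : f ∈ altF Z n)
    {y : Fin (n + 1) → Z} (hy : ¬ Function.Injective y) : f y = 0 := by
  simp only [Function.Injective, not_forall] at hy
  obtain ⟨i, j, h1, h2⟩ := hy
  exact alt_zero_of_eq hf h1 h2

lemma alt_insertNth {Z : Type*} {n : ℕ} {f : (Fin (n + 1) → Z) → ℝ} (hf : f ∈ altF Z n)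
    (p : Fin (n + 1)) (x : Z) (v : Fin n → Z) :
    f (p.insertNth x v) = (-1 : ℝ) ^ (p : ℕ) * f (Fin.cons x v : Fin (n + 1) → Z) := by
  rw [← Fin.cons_comp_cycleRange, hf]
  simp

lemma alt_insertNth' {Z : Type*} {n : ℕ} {f : (Fin (n + 1) → Z) → ℝ} (hf : f ∈ altF Z n)
    (p : Fin (n + 1)) (x : Z) (v : Fin n → Z) :
    f (Fin.cons x v : Fin (n + 1) → Z) = (-1 : ℝ) ^ (p : ℕ) * f (p.insertNth x v) := by
  rw [alt_insertNth hf, ← mul_assoc, ← pow_add, Even.neg_one_pow, one_mul]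
  exact ⟨p, rfl⟩

lemma alt_remove_pair {Z : Type*} {n : ℕ} {f : (Fin (n + 1) → Z) → ℝ} (hf : f ∈ altF Z n)
    {v : Fin (n + 2) → Z} {i j : Fin (n + 2)} (hvij : v i = v j) (hij : i ≠ j) :
    (-1 : ℝ) ^ (i : ℕ) * f (i.removeNth v) + (-1 : ℝ) ^ (j : ℕ) * f (j.removeNth v) = 0 := by
  rcases Fin.exists_succAbove_eq hij with ⟨i, rfl⟩
  rw [← (i.predAbove j).insertNth_self_removeNth (Fin.removeNth _ _),
    ← Fin.removeNth_removeNth_eq_swap,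
    Fin.removeNth, Fin.succAbove_succAbove_predAbove, alt_insertNth hf, alt_insertNth' hf i,
    Fin.insertNth_removeNth, Function.update_eq_self_iff.2, ← mul_assoc, ← pow_add,
    Fin.neg_one_pow_succAbove_add_predAbove, ← mul_assoc, neg_mul, pow_add, mul_assoc]
  · have : ((-1 : ℝ) ^ (i : ℕ)) * (-1) ^ (i : ℕ) = 1 := by
      rw [← pow_add, Even.neg_one_pow]
      exact ⟨i, rfl⟩
    generalize f _ = w
    linear_combination (-(-1 : ℝ) ^ (j : ℕ) * w) * this
  exact hvij.symm

lemma gcob_zero_of_not_inj {Z : Type*} {n : ℕ} {f : (Fin (n + 1) → Z) → ℝ} (hf : f ∈ altF Z n)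
    {y : Fin (n + 2) → Z} (hy : ¬ Function.Injective y) : gcob Z n f y = 0 := by
  simp only [Function.Injective, not_forall] at hy
  obtain ⟨i, j, h1, hij⟩ := hy
  show (∑ i : Fin (n + 2), ((-1 : ℝ) ^ (i : ℕ)) * f (y ∘ i.succAbove)) = 0
  rw [Fintype.sum_eq_add i j hij]
  · exact alt_remove_pair hf h1 hij
  · rintro k ⟨hki, hkj⟩
    rcases Fin.exists_succAbove_eq hki.symm with ⟨i, rfl⟩
    rcases Fin.exists_succAbove_eq hkj.symm with ⟨j, rfl⟩
    rw [alt_zero_of_eq hf (y := y ∘ k.succAbove) h1 (ne_of_apply_ne _ hij), mul_zero]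

/-! ### sup norms -/

lemma abs_le_supN {Z : Type*} {f : Z → ℝ} (hf : ∃ C, ∀ s, |f s| ≤ C) (s : Z) :
    |f s| ≤ supN f := by
  obtain ⟨C, hC⟩ := hf
  apply le_csInf
  · exact ⟨C, (abs_nonneg _).trans (hC s), hC⟩
  · rintro b ⟨_, hb⟩
    exact hb s

lemma supN_nonneg {Z : Type*} (f : Z → ℝ) : 0 ≤ supN f :=
  Real.sInf_nonneg (fun _ h => h.1)

lemma supN_le {Z : Type*} {f : Z → ℝ} {C : ℝ} (h0 : 0 ≤ C) (h : ∀ s, |f s| ≤ C) : supN f ≤ C :=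
  csInf_le ⟨0, fun _ h => h.1⟩ ⟨h0, h⟩

/-! ### Potentials along a spanning tree -/

/-- Product of edge elements along a list. -/
def hol {G : SerreGraph} {K : Type*} [Group K] (σ : G.E → K) : List G.E → K
  | [] => 1
  | e :: p => hol σ p * σ e

lemma hol_append {G : SerreGraph} {K : Type*} [Group K] (σ : G.E → K) (p q : List G.E) :
    hol σ (p ++ q) = hol σ q * hol σ p := by
  induction p with
  | nil => simp [hol]
  | cons e p ih => simp [hol, ih, mul_assoc]

lemma isWalk_append {G : SerreGraph} (p q : List G.E) (u w : G.V) :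
    G.IsWalk (p ++ q) u w ↔ ∃ v, G.IsWalk p u v ∧ G.IsWalk q v w := by
  induction p generalizing u with
  | nil => simp [SerreGraph.IsWalk]
  | cons e p ih => simp [SerreGraph.IsWalk, ih, and_assoc]

lemma hol_closed {G : SerreGraph} {K : Type*} [Group K] (σ : G.E → K)
    (hσ : ∀ e, σ (G.bar e) = (σ e)⁻¹) {T : Set G.E} (hT : G.IsSpanningTree T) (m : ℕ) :
    ∀ (p : List G.E) (v : G.V), p.length ≤ m → (∀ e ∈ p, e ∈ T) → G.IsWalk p v v →
      hol σ p = 1 := by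
  induction m with
  | zero =>
    intro p v hp _ _
    have : p = [] := List.length_eq_zero_iff.1 (by omega)
    rw [this]; rfl
  | succ m ih =>
    intro p v hp hpT hw
    by_cases hne : p = []
    · rw [hne]; rfl
    have hred := hT.2.2 v p hne hpT hw
    unfold SerreGraph.Reduced at hred
    obtain ⟨l1, e, f, l2, rfl, hf⟩ : ∃ l1 e f l2, p = l1 ++ e :: f :: l2 ∧ f = G.bar e := by
      clear hp hpT hw hne ih
      induction p with
      | nil => simp [List.Chain'] at hred
      | cons a p ih =>
        rcases p with _ | ⟨b, p⟩
        · simp [List.Chain'] at hred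
        · by_cases hab : b = G.bar a
          · exact ⟨[], a, b, p, rfl, hab⟩
          · have : ¬ List.Chain' (fun e f => f ≠ G.bar e) (b :: p) := by
              intro hc
              exact hred (List.isChain_cons_cons.2 ⟨hab, hc⟩)
            obtain ⟨l1, e, f, l2, h1, h2⟩ := ih this
            exact ⟨a :: l1, e, f, l2, by rw [h1]; rfl, h2⟩
    subst hf
    rw [isWalk_append] at hw
    obtain ⟨u, hw1, hw2⟩ := hw
    obtain ⟨h1, h2, h3⟩ := hw2
    have hu : G.t (G.bar e) = u := h1
    rw [hu] at h3
    have := ih (l1 ++ l2) v (by simp at hp ⊢; omega)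
      (fun x hx => hpT x (by simp at hx ⊢; tauto)) ((isWalk_append _ _ _ _).2 ⟨u, hw1, h3⟩)
    rw [hol_append] at this ⊢
    simpa [hol, hσ] using this

lemma exists_potential {G : SerreGraph} {K : Type*} [Group K] (σ : G.E → K)
    (hσ : ∀ e, σ (G.bar e) = (σ e)⁻¹) {T : Set G.E} (hT : G.IsSpanningTree T) :
    ∃ τ : G.V → K, ∀ e ∈ T, τ (G.t e) = σ e * τ (G.o e) := by
  by_cases hne : Nonempty G.V
  swap
  · exact ⟨fun _ => 1, fun e => (hne ⟨G.t e⟩).elim⟩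
  obtain ⟨v0⟩ := hne
  choose p hpT hp using hT.2.1 v0
  refine ⟨fun v => hol σ (p v), fun e he => ?_⟩
  obtain ⟨q, hqT, hq⟩ := hT.2.1 (G.t e) v0
  have h1 := hol_closed σ hσ hT _ (p (G.t e) ++ q) v0 le_rfl
    (fun x hx => by rcases List.mem_append.1 hx with h | h; exacts [hpT _ _ h, hqT _ h])
    ((isWalk_append _ _ _ _).2 ⟨_, hp _, hq⟩)
  have h2 := hol_closed σ hσ hT _ (p (G.o e) ++ e :: q) v0 le_rfl
    (fun x hx => by
      rcases List.mem_append.1 hx with h | h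
      · exact hpT _ _ h
      · rcases List.mem_cons.1 h with h | h
        · rw [h]; exact he
        · exact hqT _ h)
    ((isWalk_append _ _ _ _).2 ⟨_, hp _, rfl, hq⟩)
  rw [hol_append] at h1 h2
  have h3 := h1.trans h2.symm
  rw [hol, mul_assoc] at h3
  exact mul_left_cancel h3

/-! ### Free actions -/

lemma exists_free_model {H Z : Type*} [Group H] [MulAction H Z] [Countable Z]
    (hfree : ∀ (h : H) (z : Z), h • z = z → h = 1)
    (b : Z → Bool) (hb : ∀ (h : H) z, b (h • z) = b z)
    (c : Z → ℕ) (hc : ∀ (h : H) z, c (h • z) = c z)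
    (hsurj : ∀ β k, ∃ z, b z = β ∧ c z = k) :
    ∃ Θ : Z ≃ H × (Bool × ℕ), (∀ (h : H) z, (Θ (h • z)).1 = h * (Θ z).1) ∧
      (∀ (h : H) z, (Θ (h • z)).2 = (Θ z).2) ∧ ∀ z, (Θ z).2.1 = b z := by
  classical
  let Ω := Quotient (MulAction.orbitRel H Z)
  let bq : Ω → Bool := Quotient.lift b (by
    rintro x y ⟨h, rfl⟩; exact hb h y)
  let cq : Ω → ℕ := Quotient.lift c (by
    rintro x y ⟨h, rfl⟩; exact hc h y)
  have hbq : ∀ z, bq (Quotient.mk _ z) = b z := fun z => rfl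
  have hcq : ∀ z, cq (Quotient.mk _ z) = c z := fun z => rfl
  have hfib : ∀ β, Nonempty ({o : Ω // bq o = β} ≃ ℕ) := by
    intro β
    have : Countable Ω := Quotient.countable
    have : Infinite {o : Ω // bq o = β} := by
      refine Infinite.of_surjective (fun o => cq o.1) ?_
      intro k
      obtain ⟨z, h1, h2⟩ := hsurj β k
      exact ⟨⟨Quotient.mk _ z, h1⟩, h2⟩
    exact nonempty_equiv_of_countable
  have F : ∀ β, {o : Ω // bq o = β} ≃ ℕ := fun β => (hfib β).some
  let Ξ : Ω ≃ Bool × ℕ :=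
    (Equiv.sigmaFiberEquiv bq).symm.trans
      ((Equiv.sigmaCongrRight F).trans (Equiv.sigmaEquivProd _ _))
  have hΞ : ∀ o, (Ξ o).1 = bq o := fun o => rfl
  let A : H × Ω → Z := fun x => x.1 • (Quotient.out x.2 : Z)
  have hAq : ∀ x, (Quotient.mk _ (A x) : Ω) = x.2 := by
    rintro ⟨h, o⟩
    conv_rhs => rw [show o = Quotient.mk _ (Quotient.out o) from (Quotient.out_eq o).symm]
    exact Quotient.sound ⟨h, rfl⟩
  have hA : Function.Bijective A := by
    constructor
    · rintro ⟨h, o⟩ ⟨h', o'⟩ hh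
      have : o = o' := by
        have := congrArg (fun z => (Quotient.mk _ z : Ω)) hh
        simpa only [hAq] using this
      subst this
      have h2 : h • (Quotient.out o : Z) = h' • (Quotient.out o : Z) := hh
      have h3 : (h'⁻¹ * h) • (Quotient.out o : Z) = Quotient.out o := by
        rw [mul_smul, h2, inv_smul_smul]
      have h4 := hfree _ _ h3
      rw [inv_mul_eq_one] at h4
      rw [h4]
    · intro z
      have : (MulAction.orbitRel H Z) (Quotient.out (Quotient.mk _ z : Ω)) z :=
        Quotient.exact (Quotient.out_eq _)
      obtain ⟨h, hh⟩ := this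
      refine ⟨(h⁻¹, Quotient.mk _ z), ?_⟩
      show h⁻¹ • (Quotient.out (Quotient.mk _ z : Ω)) = z
      rw [← hh]
      exact inv_smul_smul _ _
  let E := Equiv.ofBijective A hA
  have hE : ∀ h z, E.symm (h • z) = (h * (E.symm z).1, (E.symm z).2) := by
    intro h z
    rw [Equiv.symm_apply_eq]
    show h • z = (h * (E.symm z).1) • (Quotient.out (E.symm z).2 : Z)
    rw [mul_smul]
    congr 1
    exact (E.apply_symm_apply z).symm
  refine ⟨E.symm.trans (Equiv.prodCongr (Equiv.refl H) Ξ), ?_, ?_, ?_⟩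
  · intro h z
    simp [hE]
  · intro h z
    simp [hE]
  · intro z
    show (Ξ (E.symm z).2).1 = b z
    rw [hΞ, ← hbq, ← hAq (E.symm z)]
    congr 2
    exact E.apply_symm_apply z



/-! ### A ping-pong model for the Bass-Serre tree -/

/-- The base direction `Γ_e` in `S_{t(e)}`. -/
def eB {G : SerreGraph} (𝒢 : GraphOfGroups G) (e : G.E) : 𝒢.Sv (G.t e) :=
  Sum.inr ⟨⟨e, rfl⟩, QuotientGroup.mk 1⟩

lemma smul_inl {G : SerreGraph} (𝒢 : GraphOfGroups G) (v : G.V) (γ x : 𝒢.Gv v) :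
    γ • (Sum.inl x : 𝒢.Sv v) = Sum.inl (γ * x) := rfl

lemma smul_inr {G : SerreGraph} (𝒢 : GraphOfGroups G) (v : G.V) (γ : 𝒢.Gv v)
    (e : {e : G.E // G.t e = v}) (x : 𝒢.Gv v ⧸ 𝒢.SvSubgroup v e) :
    γ • (Sum.inr ⟨e, x⟩ : 𝒢.Sv v) = Sum.inr ⟨e, γ • x⟩ := rfl

lemma mem_SvSubgroup {G : SerreGraph} (𝒢 : GraphOfGroups G) (e : G.E) (γ : 𝒢.Gv (G.t e)) :
    γ ∈ 𝒢.SvSubgroup (G.t e) ⟨e, rfl⟩ ↔ ∃ a, 𝒢.h e a = γ := Iff.rfl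

lemma smul_eB {G : SerreGraph} (𝒢 : GraphOfGroups G) (e : G.E) (γ : 𝒢.Gv (G.t e)) :
    γ • eB 𝒢 e = Sum.inr ⟨⟨e, rfl⟩, QuotientGroup.mk γ⟩ := by
  rw [eB, smul_inr]
  have : γ • (QuotientGroup.mk 1 : 𝒢.Gv (G.t e) ⧸ 𝒢.SvSubgroup (G.t e) ⟨e, rfl⟩)
    = QuotientGroup.mk γ := by
    show QuotientGroup.mk (γ * 1) = _
    rw [mul_one]
  rw [this]

lemma smul_eB_eq {G : SerreGraph} (𝒢 : GraphOfGroups G) (e : G.E) (γ : 𝒢.Gv (G.t e)) :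
    γ • eB 𝒢 e = eB 𝒢 e ↔ ∃ a, 𝒢.h e a = γ := by
  rw [smul_eB, eB, ← mem_SvSubgroup]
  constructor
  · intro h
    have h1 := Sum.inr_injective h
    have h2 := eq_of_heq (Sigma.mk.inj h1).2
    rw [eq_comm, QuotientGroup.eq] at h2
    simpa using h2
  · intro h
    congr 2
    rw [eq_comm, QuotientGroup.eq]
    simpa using h

lemma exists_vertex_model {G : SerreGraph} (𝒢 : GraphOfGroups G) (v : G.V)
    [Countable (𝒢.Gv v)] [Finite G.E] :
    ∃ (ρ : 𝒢.Gv v →* Equiv.Perm ℕ) (d : ℕ → 𝒢.Sv v) (c : ℕ → ℕ),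
      (∀ γ x, d (ρ γ x) = γ • d x) ∧ (∀ γ x, ρ γ x = x → γ = 1) ∧ (∀ γ x, c (ρ γ x) = c x) ∧
      ∀ s k, ∃ x, d x = s ∧ c x = k := by
  have : Countable (𝒢.Sv v) := by
    have : ∀ e : {e : G.E // G.t e = v}, Countable (𝒢.Gv v ⧸ 𝒢.SvSubgroup v e) :=
      fun e => Quotient.countable
    infer_instance
  obtain ⟨E⟩ : Nonempty ((𝒢.Gv v × 𝒢.Sv v × ℕ) ≃ ℕ) := by
    have : Nonempty (𝒢.Sv v) := ⟨Sum.inl 1⟩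
    exact nonempty_equiv_of_countable
  let act : 𝒢.Gv v → Equiv.Perm (𝒢.Gv v × 𝒢.Sv v × ℕ) := fun γ =>
    Equiv.prodCongr (Equiv.mulLeft γ) (Equiv.prodCongr (MulAction.toPerm γ) (Equiv.refl ℕ))
  have hact : ∀ γ x, act γ x = (γ * x.1, γ • x.2.1, x.2.2) := fun γ x => rfl
  refine ⟨MonoidHom.mk' (fun γ => (E.symm.trans (act γ)).trans E) ?_,
    fun x => (E.symm x).2.1, fun x => (E.symm x).2.2, ?_, ?_, ?_, ?_⟩
  · intro a b
    ext x
    simp [hact, mul_smul, mul_assoc]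
  · intro γ x
    simp [hact]
  · intro γ x h
    have h' : E (act γ (E.symm x)) = x := h
    rw [← Equiv.eq_symm_apply, hact] at h'
    have := congrArg Prod.fst h'
    simpa [SerreGraph.o] using this
  · intro γ x
    simp [hact]
  · intro s k
    exact ⟨E (1, s, k), by simp⟩

lemma exists_edge_model {H : Type*} [Group H] {Z₁ Z₂ : Type*}
    (ρ₁ ρ₂ : H →* Equiv.Perm ℕ) (d₁ : ℕ → Z₁) (d₂ : ℕ → Z₂) (c₁ c₂ : ℕ → ℕ) (z₁ : Z₁) (z₂ : Z₂)
    (z₁' : Z₁) (z₂' : Z₂) (h₁ : z₁' ≠ z₁) (h₂ : z₂' ≠ z₂)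
    (hd₁ : ∀ a x, d₁ (ρ₁ a x) = z₁ ↔ d₁ x = z₁) (hd₂ : ∀ a x, d₂ (ρ₂ a x) = z₂ ↔ d₂ x = z₂)
    (hf₁ : ∀ γ x, ρ₁ γ x = x → γ = 1) (hf₂ : ∀ γ x, ρ₂ γ x = x → γ = 1)
    (hc₁ : ∀ γ x, c₁ (ρ₁ γ x) = c₁ x) (hc₂ : ∀ γ x, c₂ (ρ₂ γ x) = c₂ x)
    (hs₁ : ∀ s k, ∃ x, d₁ x = s ∧ c₁ x = k) (hs₂ : ∀ s k, ∃ x, d₂ x = s ∧ c₂ x = k) :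
    ∃ σ : Equiv.Perm ℕ, (∀ a, σ * ρ₁ a = ρ₂ a * σ) ∧
      ∀ x, d₂ (σ x) = z₂ ∨ d₁ x = z₁ := by
  classical
  obtain ⟨Θ₁, hΘ₁⟩ : ∃ Θ : ℕ ≃ H × (Bool × ℕ), (∀ (h : H) z, (Θ (ρ₁ h z)).1 = h * (Θ z).1) ∧
      (∀ (h : H) z, (Θ (ρ₁ h z)).2 = (Θ z).2) ∧ ∀ z, (Θ z).2.1 = decide (d₁ z = z₁) := by
    let _ : MulAction H ℕ := MulAction.compHom ℕ ρ₁
    refine exists_free_model (H := H) (Z := ℕ) hf₁ (fun z => decide (d₁ z = z₁)) ?_ c₁ hc₁ ?_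
    · intro h z
      exact decide_eq_decide.2 (hd₁ h z)
    · rintro (_ | _) k
      · obtain ⟨x, hx, hk⟩ := hs₁ z₁' k
        exact ⟨x, by simp [hx, h₁], hk⟩
      · obtain ⟨x, hx, hk⟩ := hs₁ z₁ k
        exact ⟨x, by simp [hx], hk⟩
  obtain ⟨Θ₂, hΘ₂⟩ : ∃ Θ : ℕ ≃ H × (Bool × ℕ), (∀ (h : H) z, (Θ (ρ₂ h z)).1 = h * (Θ z).1) ∧
      (∀ (h : H) z, (Θ (ρ₂ h z)).2 = (Θ z).2) ∧ ∀ z, (Θ z).2.1 = decide (d₂ z ≠ z₂) := by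
    let _ : MulAction H ℕ := MulAction.compHom ℕ ρ₂
    refine exists_free_model (H := H) (Z := ℕ) hf₂ (fun z => decide (d₂ z ≠ z₂)) ?_ c₂ hc₂ ?_
    · intro h z
      exact decide_eq_decide.2 (not_congr (hd₂ h z))
    · rintro (_ | _) k
      · obtain ⟨x, hx, hk⟩ := hs₂ z₂ k
        exact ⟨x, by simp [hx], hk⟩
      · obtain ⟨x, hx, hk⟩ := hs₂ z₂' k
        exact ⟨x, by simp [hx, h₂], hk⟩
  refine ⟨Θ₁.trans Θ₂.symm, ?_, ?_⟩
  · intro a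
    ext x
    show Θ₂.symm (Θ₁ (ρ₁ a x)) = ρ₂ a (Θ₂.symm (Θ₁ x))
    rw [Equiv.symm_apply_eq]
    apply Prod.ext
    · rw [hΘ₁.1, hΘ₂.1, Equiv.apply_symm_apply]
    · rw [hΘ₁.2.1, hΘ₂.2.1, Equiv.apply_symm_apply]
  · intro x
    by_cases hx : d₁ x = z₁
    · exact Or.inr hx
    · left
      have h3 := hΘ₂.2.2 (Θ₂.symm (Θ₁ x))
      rw [Equiv.apply_symm_apply, hΘ₁.2.2] at h3
      have h4 := decide_eq_decide.1 h3
      show d₂ (Θ₂.symm (Θ₁ x)) = z₂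
      by_contra h5
      exact hx (h4.2 h5)

/-- The edge condition. -/
def EdgeOK {G : SerreGraph} (𝒢 : GraphOfGroups G) (ρ : ∀ v, 𝒢.Gv v →* Equiv.Perm ℕ)
    (d : ∀ v, ℕ → 𝒢.Sv v) (e : G.E) (σ : Equiv.Perm ℕ) : Prop :=
  (∀ a, σ * ρ _ (𝒢.h (G.bar e) (𝒢.barEquiv e a)) = ρ _ (𝒢.h e a) * σ) ∧
    ∀ x, d _ (σ x) = eB 𝒢 e ∨ d _ x = eB 𝒢 (G.bar e)

lemma h_congr {G : SerreGraph} (𝒢 : GraphOfGroups G) (ρ : ∀ v, 𝒢.Gv v →* Equiv.Perm ℕ)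
    {e e' : G.E} (he : e' = e) (a : 𝒢.Ge e) (b : 𝒢.Ge e') (hab : HEq b a) :
    ρ _ (𝒢.h e' b) = ρ _ (𝒢.h e a) := by
  subst he
  rw [eq_of_heq hab]

lemma eB_congr {G : SerreGraph} (𝒢 : GraphOfGroups G) (d : ∀ v, ℕ → 𝒢.Sv v)
    {e e' : G.E} (he : e' = e) (x : ℕ) :
    d _ x = eB 𝒢 e' ↔ d _ x = eB 𝒢 e := by
  subst he
  rfl

lemma EdgeOK.bar {G : SerreGraph} {𝒢 : GraphOfGroups G} {ρ : ∀ v, 𝒢.Gv v →* Equiv.Perm ℕ}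
    {d : ∀ v, ℕ → 𝒢.Sv v} {e : G.E} {σ : Equiv.Perm ℕ} (h : EdgeOK 𝒢 ρ d e σ) :
    EdgeOK 𝒢 ρ d (G.bar e) σ⁻¹ := by
  constructor
  · intro a
    obtain ⟨a, rfl⟩ := (𝒢.barEquiv e).surjective a
    rw [h_congr 𝒢 ρ (G.bar_bar e) a _ (𝒢.barEquiv_coh e a)]
    rw [inv_mul_eq_iff_eq_mul, ← mul_assoc, h.1, mul_inv_cancel_right]
  · intro x
    rw [eB_congr 𝒢 d (G.bar_bar e)]
    have := h.2 (σ⁻¹ x)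
    simp only [← Equiv.Perm.mul_apply, mul_inv_cancel, Equiv.Perm.one_apply] at this
    exact this.symm

/-- The fundamental group acts on `ℕ` with direction maps satisfying ping-pong. -/
lemma exists_action {G : SerreGraph} [Finite G.E] (𝒢 : GraphOfGroups G)
    (hcount : ∀ v : G.V, Countable (𝒢.Gv v)) (T : Set G.E) (hT : G.IsSpanningTree T)
    (O : Set G.E) (hO : G.IsOrientation O) :
    ∃ (π : 𝒢.pi1 T →* Equiv.Perm ℕ) (D : ∀ v, ℕ → 𝒢.Sv v),
      (∀ v γ x, D v (π (𝒢.vtxIncl T v γ) x) = γ • D v x) ∧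
      (∀ e x, D (G.t e) (π (𝒢.edgeElt T e) x) = eB 𝒢 e ∨
        D (G.t (G.bar e)) x = eB 𝒢 (G.bar e)) ∧
      ∀ v, ∃ x, D v x = Sum.inl 1 := by
  classical
  choose ρ d c hd hf hc hs using fun v => exists_vertex_model 𝒢 v
  have hex : ∀ e, ∃ σ, EdgeOK 𝒢 ρ d e σ := by
    intro e
    have key : ∀ (e : G.E) (a : 𝒢.Ge e) x, d _ (ρ _ (𝒢.h e a) x) = eB 𝒢 e ↔ d _ x = eB 𝒢 e := by
      intro e a x
      rw [hd]
      have h1 := (smul_eB_eq 𝒢 e (𝒢.h e a)).2 ⟨a, rfl⟩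
      constructor
      · intro h2
        rw [← h1] at h2
        exact smul_left_cancel _ h2
      · intro h2
        rw [h2, h1]
    exact exists_edge_model ((ρ _).comp ((𝒢.h (G.bar e)).comp (𝒢.barEquiv e).toMonoidHom))
      ((ρ _).comp (𝒢.h e)) (d _) (d _) (c _) (c _) (eB 𝒢 (G.bar e)) (eB 𝒢 e)
      (Sum.inl 1) (Sum.inl 1) (by simp [eB]) (by simp [eB])
      (fun a x => key (G.bar e) (𝒢.barEquiv e a) x) (key e)
      (fun a x h => by
        have h1 := hf _ _ _ h
        have h2 := (injective_iff_map_eq_one _).1 (𝒢.h_inj (G.bar e)) (𝒢.barEquiv e a) h1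
        simpa using h2)
      (fun a x h => (injective_iff_map_eq_one _).1 (𝒢.h_inj e) a (hf _ _ _ h))
      (fun a x => hc _ _ _) (fun a x => hc _ _ _) (hs _) (hs _)
  choose σ0 hσ0 using hex
  let σ : G.E → Equiv.Perm ℕ := fun e => if e ∈ O then σ0 e else (σ0 (G.bar e))⁻¹
  have hσO : ∀ e, e ∈ O → σ e = σ0 e := fun e he => if_pos he
  have hσO' : ∀ e, e ∉ O → σ e = (σ0 (G.bar e))⁻¹ := fun e he => if_neg he
  have hbar : ∀ e, σ (G.bar e) = (σ e)⁻¹ := by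
    intro e
    by_cases he : e ∈ O
    · rw [hσO e he, hσO' _ ((hO e).1 he), G.bar_bar]
    · have : G.bar e ∈ O := by
        by_contra h
        exact he ((hO e).2 h)
      rw [hσO' e he, hσO _ this, inv_inv]
  have hσ : ∀ e, EdgeOK 𝒢 ρ d e (σ e) := by
    intro e
    by_cases he : e ∈ O
    · rw [hσO e he]; exact hσ0 e
    · rw [hσO' e he]
      have := (hσ0 (G.bar e)).bar
      rwa [G.bar_bar] at this
  obtain ⟨τ, hτ⟩ := exists_potential σ hbar hT
  let F : 𝒢.gens → Equiv.Perm ℕ := fun s => match s with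
    | Sum.inl ⟨v, γ⟩ => (τ v)⁻¹ * ρ v γ * τ v
    | Sum.inr e => (τ (G.t e))⁻¹ * σ e * τ (G.o e)
  have hFl : ∀ v γ, F (Sum.inl ⟨v, γ⟩) = (τ v)⁻¹ * ρ v γ * τ v := fun v γ => rfl
  have hFr : ∀ e, F (Sum.inr e) = (τ (G.t e))⁻¹ * σ e * τ (G.o e) := fun e => rfl
  have hF : ∀ r ∈ 𝒢.rels T, FreeGroup.lift F r = 1 := by
    rintro r (⟨v, g, h', rfl⟩ | ⟨e, rfl⟩ | ⟨e, a, rfl⟩ | ⟨e, he, rfl⟩)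
    · simp only [map_mul, map_inv, FreeGroup.lift_apply_of, hFl]
      group
    · simp only [map_mul, map_inv, FreeGroup.lift_apply_of, hFr, hbar, SerreGraph.o, G.bar_bar]
      group
    · simp only [map_mul, map_inv, FreeGroup.lift_apply_of, hFr, hFl, SerreGraph.o]
      have := (hσ e).1 a
      generalize ρ (G.t (G.bar e)) _ = A at *
      generalize ρ (G.t e) _ = B at *
      have h2 : A = (σ e)⁻¹ * (B * σ e) := by rw [← this]; group
      rw [h2]
      group
    · simp only [FreeGroup.lift_apply_of, hFr, hτ e he]
      group
  obtain ⟨π, hπl, hπr⟩ : ∃ π : 𝒢.pi1 T →* Equiv.Perm ℕ,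
      (∀ v γ, π (𝒢.vtxIncl T v γ) = (τ v)⁻¹ * ρ v γ * τ v) ∧
      (∀ e, π (𝒢.edgeElt T e) = (τ (G.t e))⁻¹ * σ e * τ (G.o e)) :=
    ⟨PresentedGroup.toGroup hF, fun v γ => PresentedGroup.toGroup.of hF,
      fun e => PresentedGroup.toGroup.of hF⟩
  refine ⟨π, fun v x => d v (τ v x), ?_, ?_, ?_⟩
  · intro v γ x
    rw [hπl, ← hd]
    simp
  · intro e x
    rw [hπr]
    have := (hσ e).2 (τ (G.o e) x)
    simpa [SerreGraph.o] using this
  · intro v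
    obtain ⟨x, hx, -⟩ := hs v (Sum.inl 1) 0
    exact ⟨(τ v)⁻¹ x, by simpa using hx⟩



lemma edge_mul_bar {G : SerreGraph} (𝒢 : GraphOfGroups G) (T : Set G.E) (e : G.E) :
    𝒢.edgeElt T e * 𝒢.edgeElt T (G.bar e) = 1 := by
  have h1 := 𝒢.mk_rel_one (T := T) (Or.inr (Or.inl ⟨e, rfl⟩))
  rw [map_mul] at h1
  exact h1

lemma edge_conj {G : SerreGraph} (𝒢 : GraphOfGroups G) (T : Set G.E) (e : G.E) (a : 𝒢.Ge e) :
    𝒢.edgeElt T e * 𝒢.vtxIncl T _ (𝒢.h (G.bar e) (𝒢.barEquiv e a)) * (𝒢.edgeElt T e)⁻¹ =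
      𝒢.vtxIncl T _ (𝒢.h e a) := by
  have h1 := 𝒢.mk_rel_one (T := T) (Or.inr (Or.inr (Or.inl ⟨e, a, rfl⟩)))
  rw [map_mul, map_mul, map_mul, map_inv, map_inv] at h1
  exact mul_inv_eq_one.1 h1

lemma edge_tree {G : SerreGraph} (𝒢 : GraphOfGroups G) (T : Set G.E) (e : G.E) (he : e ∈ T) :
    𝒢.edgeElt T e = 1 :=
  𝒢.mk_rel_one (T := T) (Or.inr (Or.inr (Or.inr ⟨e, he, rfl⟩)))

lemma pi1_induction {G : SerreGraph} (𝒢 : GraphOfGroups G) (T : Set G.E) (C : 𝒢.pi1 T → Prop)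
    (h1 : C 1) (hv : ∀ v γ, C (𝒢.vtxIncl T v γ)) (he : ∀ e, C (𝒢.edgeElt T e))
    (hm : ∀ x y, C x → C y → C (x * y)) (g : 𝒢.pi1 T) : C g := by
  obtain ⟨w, rfl⟩ : ∃ w, PresentedGroup.mk (𝒢.rels T) w = g := PresentedGroup.mk_surjective _ g
  refine FreeGroup.induction_on (C := fun w => C (PresentedGroup.mk (𝒢.rels T) w)) w ?_ ?_ ?_ ?_
  · rw [map_one]; exact h1
  · rintro (⟨v, γ⟩ | e)
    · exact hv v γ
    · exact he e
  · rintro (⟨v, γ⟩ | e) -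
    · have h2 := hv v γ⁻¹
      rw [map_inv] at h2
      exact h2
    · have h2 := he (G.bar e)
      rw [eq_inv_of_mul_eq_one_right (edge_mul_bar 𝒢 T e)] at h2
      exact h2
  · intro x y hx hy
    rw [map_mul]
    exact hm _ _ hx hy

/-- Reduced edge paths in the Bass-Serre tree, with the direction of the last edge. -/
inductive Red {G : SerreGraph} (𝒢 : GraphOfGroups G) (T : Set G.E) (g₀ : 𝒢.pi1 T) (v₀ : G.V) :
    𝒢.pi1 T → G.V → Option (Σ v, 𝒢.Sv v) → Prop
  | base (γ : 𝒢.Gv v₀) : Red 𝒢 T g₀ v₀ (g₀ * 𝒢.vtxIncl T v₀ γ) v₀ none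
  | step (e : G.E) (g : 𝒢.pi1 T) (s : Option (Σ v, 𝒢.Sv v)) (γ : 𝒢.Gv (G.t (G.bar e)))
      (h : Red 𝒢 T g₀ v₀ g (G.t e) s) (hs : s ≠ some ⟨G.t e, eB 𝒢 e⟩) :
      Red 𝒢 T g₀ v₀ (g * 𝒢.edgeElt T e * 𝒢.vtxIncl T _ γ) (G.t (G.bar e))
        (some ⟨G.t (G.bar e), γ⁻¹ • eB 𝒢 (G.bar e)⟩)

lemma Red.vmove {G : SerreGraph} {𝒢 : GraphOfGroups G} {T : Set G.E} {g₀ : 𝒢.pi1 T} {v₀ : G.V}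
    {g : 𝒢.pi1 T} {v : G.V} {s : Option (Σ v, 𝒢.Sv v)} (h : Red 𝒢 T g₀ v₀ g v s)
    (δ : 𝒢.Gv v) : ∃ s', Red 𝒢 T g₀ v₀ (g * 𝒢.vtxIncl T v δ) v s' := by
  cases h with
  | base γ =>
    rw [mul_assoc, ← map_mul]
    exact ⟨_, Red.base _⟩
  | step e g s γ h hs =>
    rw [mul_assoc, ← map_mul]
    exact ⟨_, Red.step e g s _ h hs⟩

/-- The edge of a direction. -/
def dirE {G : SerreGraph} (𝒢 : GraphOfGroups G) : (Σ v, 𝒢.Sv v) → Option G.E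
  | ⟨_, Sum.inl _⟩ => none
  | ⟨_, Sum.inr ⟨e, _⟩⟩ => some e.1

lemma Red.emove {G : SerreGraph} {𝒢 : GraphOfGroups G} {T : Set G.E} {g₀ : 𝒢.pi1 T} {v₀ : G.V}
    {g : 𝒢.pi1 T} {v : G.V} {s : Option (Σ v, 𝒢.Sv v)} (h : Red 𝒢 T g₀ v₀ g v s)
    (e : G.E) (hv : v = G.t e) : ∃ s', Red 𝒢 T g₀ v₀ (g * 𝒢.edgeElt T e) (G.t (G.bar e)) s' := by
  by_cases hs : s = some ⟨G.t e, eB 𝒢 e⟩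
  · cases h with
    | base γ => cases hs
    | step f g s γ h hs' =>
      have h1 := Option.some_injective _ hs
      have h2 : G.bar f = e := by
        have := congrArg (dirE 𝒢) h1
        rw [smul_eB] at this
        exact Option.some_injective _ this
      subst h2
      have h3 := eq_of_heq (Sigma.mk.inj h1).2
      rw [smul_eB_eq] at h3
      obtain ⟨b, hb⟩ := h3
      obtain ⟨a, rfl⟩ := (𝒢.barEquiv f).surjective b
      have h4 : γ = 𝒢.h (G.bar f) (𝒢.barEquiv f a⁻¹) := by
        rw [map_inv, map_inv, hb, inv_inv]
      have h5 : g * 𝒢.edgeElt T f * 𝒢.vtxIncl T _ γ * 𝒢.edgeElt T (G.bar f) =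
          g * 𝒢.vtxIncl T _ (𝒢.h f a⁻¹) := by
        rw [← edge_conj, ← h4, ← eq_inv_of_mul_eq_one_right (edge_mul_bar 𝒢 T f)]
        simp only [mul_assoc]
      rw [h5, G.bar_bar]
      exact h.vmove _
  · subst hv
    have := Red.step e g s 1 h hs
    rw [map_one, mul_one] at this
    exact ⟨_, this⟩

lemma Red.tmove {G : SerreGraph} {𝒢 : GraphOfGroups G} {T : Set G.E} (hT : G.IsSpanningTree T)
    {g₀ : 𝒢.pi1 T} {v₀ : G.V} {g : 𝒢.pi1 T} {v : G.V} {s : Option (Σ v, 𝒢.Sv v)}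
    (h : Red 𝒢 T g₀ v₀ g v s) (u : G.V) : ∃ s', Red 𝒢 T g₀ v₀ g u s' := by
  obtain ⟨p, hp, hw⟩ := hT.2.1 u v
  induction p generalizing u with
  | nil =>
    have : u = v := hw
    subst this
    exact ⟨_, h⟩
  | cons e p ih =>
    obtain ⟨h1, h2⟩ := hw
    obtain ⟨s', hs'⟩ := ih (G.t e) (fun x hx => hp x (List.mem_cons_of_mem _ hx)) h2
    obtain ⟨s'', h3⟩ := hs'.emove e rfl
    rw [edge_tree 𝒢 T e (hp e List.mem_cons_self), mul_one] at h3
    rw [← h1]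
    exact ⟨_, h3⟩

lemma red_all {G : SerreGraph} (𝒢 : GraphOfGroups G) {T : Set G.E} (hT : G.IsSpanningTree T)
    (g₀ : 𝒢.pi1 T) (v₀ : G.V) (g : 𝒢.pi1 T) (v : G.V) : ∃ s, Red 𝒢 T g₀ v₀ g v s := by
  have key : ∀ h : 𝒢.pi1 T, ∀ g, (∀ v, ∃ s, Red 𝒢 T g₀ v₀ g v s) →
      ∀ v, ∃ s, Red 𝒢 T g₀ v₀ (g * h) v s := by
    refine pi1_induction 𝒢 T _ ?_ ?_ ?_ ?_
    · intro g h v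
      rw [mul_one]; exact h v
    · intro u γ g h v
      obtain ⟨s, hs⟩ := h u
      obtain ⟨s, hs⟩ := hs.vmove γ
      exact hs.tmove hT v
    · intro e g h v
      obtain ⟨s, hs⟩ := h (G.t e)
      obtain ⟨s, hs⟩ := hs.emove e rfl
      exact hs.tmove hT v
    · intro x y hx hy g h v
      rw [← mul_assoc]
      exact hy _ (hx _ h) v
  have h0 : ∀ v, ∃ s, Red 𝒢 T g₀ v₀ g₀ v s := by
    intro v
    have := Red.base (𝒢 := 𝒢) (T := T) (g₀ := g₀) (v₀ := v₀) 1
    rw [map_one, mul_one] at this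
    exact this.tmove hT v
  have := key (g₀⁻¹ * g) g₀ h0 v
  rwa [mul_inv_cancel_left] at this

/-- The axioms for direction maps. -/
structure IsDir {G : SerreGraph} (𝒢 : GraphOfGroups G) (T : Set G.E) {X : Type*}
    (π : 𝒢.pi1 T →* Equiv.Perm X) (q : ∀ v, X → 𝒢.Sv v) : Prop where
  equi : ∀ v γ x, q v (π (𝒢.vtxIncl T v γ) x) = γ • q v x
  sep : ∀ e x, q (G.t e) (π (𝒢.edgeElt T e) x) = eB 𝒢 e ∨
        q (G.t (G.bar e)) x = eB 𝒢 (G.bar e)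

lemma smul_isRight {G : SerreGraph} (𝒢 : GraphOfGroups G) (v : G.V) (γ : 𝒢.Gv v) (s : 𝒢.Sv v) :
    (γ • s).isRight = s.isRight := by
  rcases s with x | ⟨e, x⟩ <;> rfl

lemma IsDir.separation {G : SerreGraph} {𝒢 : GraphOfGroups G} {T : Set G.E}
    (hT : G.IsSpanningTree T) {X : Type*}
    {π : 𝒢.pi1 T →* Equiv.Perm X} {q : ∀ v, X → 𝒢.Sv v} (hq : IsDir 𝒢 T π q)
    (g : 𝒢.pi1 T) (v : G.V) (g' : 𝒢.pi1 T) (v' : G.V) :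
    (∃ γ : 𝒢.Gv v, v' = v ∧ g' = g * 𝒢.vtxIncl T v γ) ∨
    ∃ (s : 𝒢.Sv v) (s' : 𝒢.Sv v'), s.isRight ∧ s'.isRight ∧
      ∀ x, q v (π g⁻¹ x) = s ∨ q v' (π g'⁻¹ x) = s' := by
  obtain ⟨r, hr⟩ := red_all 𝒢 hT g v g' v'
  have main : (r = none ∧ ∃ γ : 𝒢.Gv v, v' = v ∧ g' = g * 𝒢.vtxIncl T v γ) ∨
    ∃ (s : 𝒢.Sv v) (s' : 𝒢.Sv v'), r = some ⟨v', s'⟩ ∧ s.isRight ∧ s'.isRight ∧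
      ∀ x, q v (π g⁻¹ x) = s ∨ q v' (π g'⁻¹ x) = s' := by
    induction hr with
    | base γ => exact Or.inl ⟨rfl, γ, rfl, rfl⟩
    | step e g' s γ h hs ih =>
      right
      have hstep : ∀ x, q (G.t e) (π g'⁻¹ x) = eB 𝒢 e ∨
          q (G.t (G.bar e)) (π (g' * 𝒢.edgeElt T e * 𝒢.vtxIncl T _ γ)⁻¹ x)
            = γ⁻¹ • eB 𝒢 (G.bar e) := by
        intro x
        have h1 := hq.sep e (π (g' * 𝒢.edgeElt T e)⁻¹ x)
        rw [← Equiv.Perm.mul_apply, ← map_mul] at h1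
        rw [mul_inv_rev _ (𝒢.vtxIncl T _ γ), ← map_inv, map_mul, Equiv.Perm.mul_apply, hq.equi]
        rcases h1 with h1 | h1
        · left
          rw [← h1]
          congr 3
          group
        · right
          rw [h1]
      rcases ih with ⟨-, δ, hv, hg⟩ | ⟨s0, s', hs', hr0, hr', hx⟩
      · subst hv
        refine ⟨δ • eB 𝒢 e, _, rfl, by rw [smul_isRight]; rfl, by rw [smul_isRight]; rfl, ?_⟩
        intro x
        refine (hstep x).imp (fun h => ?_) id
        rw [← h, ← hq.equi, ← Equiv.Perm.mul_apply, ← map_mul]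
        congr 3
        rw [hg]
        group
      · refine ⟨s0, _, rfl, hr0, by rw [smul_isRight]; rfl, ?_⟩
        intro x
        rcases hx x with h1 | h1
        · exact Or.inl h1
        · refine Or.inr ((hstep x).resolve_left ?_)
          intro h2
          rw [h1] at h2
          subst h2
          exact hs hs'
  rcases main with ⟨-, h⟩ | ⟨s, s', -, h⟩
  · exact Or.inl h
  · exact Or.inr ⟨s, s', h⟩


open Classical in
/-- Push an interior point of `S_v` to the coset of the edge `e`. -/
def upE {G : SerreGraph} (𝒢 : GraphOfGroups G) (v : G.V) (e : G.E) (s : 𝒢.Sv v) : 𝒢.Sv v :=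
  match s with
  | Sum.inl γ => if h : G.t e = v then Sum.inr ⟨⟨e, h⟩, QuotientGroup.mk γ⟩ else Sum.inl γ
  | Sum.inr y => Sum.inr y

lemma upE_smul {G : SerreGraph} (𝒢 : GraphOfGroups G) (v : G.V) (e : G.E) (γ : 𝒢.Gv v)
    (s : 𝒢.Sv v) : upE 𝒢 v e (γ • s) = γ • upE 𝒢 v e s := by
  rcases s with x | ⟨e', x⟩
  · rw [smul_inl]
    by_cases h : G.t e = v
    · simp only [upE, h, dite_true]
      rw [smul_inr]; rfl
    · simp only [upE, h, dite_false]
      rw [smul_inl]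
  · rfl

lemma upE_inr {G : SerreGraph} (𝒢 : GraphOfGroups G) (v : G.V) (e : G.E) (s : 𝒢.Sv v)
    (hs : s.isRight) : upE 𝒢 v e s = s := by
  rcases s with x | ⟨e', x⟩
  · simp at hs
  · rfl

lemma upE_inl {G : SerreGraph} (𝒢 : GraphOfGroups G) (e : G.E) (γ : 𝒢.Gv (G.t e)) :
    upE 𝒢 (G.t e) e (Sum.inl γ) = γ • eB 𝒢 e := by
  rw [smul_eB]
  simp [upE]

lemma upE_wd {G : SerreGraph} {𝒢 : GraphOfGroups G} {T : Set G.E}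
    (hT : G.IsSpanningTree T) {X : Type*}
    {π : 𝒢.pi1 T →* Equiv.Perm X} {D : ∀ v, X → 𝒢.Sv v} (hD : IsDir 𝒢 T π D)
    (v : G.V) (e : G.E) (x : X) (hx : D (G.t e) x = Sum.inl 1) (g : 𝒢.pi1 T) (a : 𝒢.Ge e) :
    upE 𝒢 v e (D v (π (g * 𝒢.edgeHom T e a) x)) = upE 𝒢 v e (D v (π g x)) := by
  have hk : 𝒢.edgeHom T e a = 𝒢.vtxIncl T (G.t e) (𝒢.h e a) := rfl
  rw [hk]
  have h2 : D (G.t e) (π (𝒢.vtxIncl T (G.t e) (𝒢.h e a)) x) = Sum.inl (𝒢.h e a) := by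
    rw [hD.equi, hx, smul_inl, mul_one]
  rcases hD.separation hT g (G.t e) 1 v with ⟨γ, hv, hg⟩ | ⟨s, s', hs, hs', h⟩
  · subst hv
    have hg' : g = 𝒢.vtxIncl T (G.t e) γ⁻¹ := by
      rw [map_inv]; exact eq_inv_of_mul_eq_one_left hg.symm
    rw [hg', map_mul, Equiv.Perm.mul_apply, hD.equi, h2, hD.equi, hx, upE_smul, upE_smul,
      upE_inl, upE_inl, one_smul, (smul_eB_eq 𝒢 e _).2 ⟨a, rfl⟩]
  · have e1 : D v (π g x) = s' := by
      have := h (π g x)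
      rw [← Equiv.Perm.mul_apply, ← map_mul, inv_mul_cancel, map_one, Equiv.Perm.one_apply, hx,
        inv_one, map_one, Equiv.Perm.one_apply] at this
      refine this.resolve_left ?_
      rintro rfl
      simp at hs
    have e2 : D v (π (g * 𝒢.vtxIncl T (G.t e) (𝒢.h e a)) x) = s' := by
      have := h (π (g * 𝒢.vtxIncl T (G.t e) (𝒢.h e a)) x)
      rw [← Equiv.Perm.mul_apply, ← map_mul, inv_mul_cancel_left, h2,
        inv_one, map_one, Equiv.Perm.one_apply] at this
      refine this.resolve_left ?_
      rintro rfl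
      simp at hs
    rw [e1, e2]

/-- The direction maps on `S_𝒢` obtained from those of an action. -/
def qSG {G : SerreGraph} (𝒢 : GraphOfGroups G) (T O : Set G.E) {X : Type*}
    (π : 𝒢.pi1 T →* Equiv.Perm X) (D : ∀ v, X → 𝒢.Sv v) (b : G.V → X) (v : G.V)
    (s : 𝒢.SG T O) : 𝒢.Sv v :=
  match s with
  | Sum.inl (g, u) => D v (π g (b u))
  | Sum.inr ⟨e, c⟩ => upE 𝒢 v e.1 (D v (π (Quotient.out c) (b (G.t e.1))))

lemma qSG_mk {G : SerreGraph} {𝒢 : GraphOfGroups G} {T : Set G.E} (O : Set G.E)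
    (hT : G.IsSpanningTree T) {X : Type*}
    {π : 𝒢.pi1 T →* Equiv.Perm X} {D : ∀ v, X → 𝒢.Sv v} (hD : IsDir 𝒢 T π D)
    (b : G.V → X) (hb : ∀ u, D u (b u) = Sum.inl 1)
    (v : G.V) (e : {e : G.E // e ∈ O}) (g : 𝒢.pi1 T) :
    qSG 𝒢 T O π D b v (Sum.inr ⟨e, QuotientGroup.mk g⟩) =
      upE 𝒢 v e.1 (D v (π g (b (G.t e.1)))) := by
  obtain ⟨⟨k, a, rfl⟩, hk⟩ := QuotientGroup.mk_out_eq_mul (𝒢.edgeSubgroupΓ T e.1) g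
  show upE 𝒢 v e.1 (D v (π (Quotient.out (QuotientGroup.mk g)) (b (G.t e.1)))) = _
  rw [hk]
  exact upE_wd hT hD v e.1 _ (hb _) g a

lemma exists_dir {G : SerreGraph} [Finite G.E] (𝒢 : GraphOfGroups G)
    (hcount : ∀ v : G.V, Countable (𝒢.Gv v))
    (T : Set G.E) (hT : G.IsSpanningTree T) (O : Set G.E) (hO : G.IsOrientation O) :
    ∃ q : ∀ v, 𝒢.SG T O → 𝒢.Sv v,
      IsDir 𝒢 T (MulAction.toPermHom (𝒢.pi1 T) (𝒢.SG T O)) q ∧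
      ∀ v s, q v (𝒢.phiV T O hO v s) = s := by
  obtain ⟨π, D, h1, h2, h3⟩ := exists_action 𝒢 hcount T hT O hO
  have hD : IsDir 𝒢 T π D := ⟨h1, h2⟩
  choose b hb using h3
  have hmk := fun v e g => qSG_mk O hT hD b hb v e g
  refine ⟨qSG 𝒢 T O π D b, ⟨?_, ?_⟩, ?_⟩
  · rintro v γ (⟨g, u⟩ | ⟨e, c⟩)
    · show D v (π (𝒢.vtxIncl T v γ * g) (b u)) = γ • D v (π g (b u))
      rw [map_mul, Equiv.Perm.mul_apply, h1]
    · obtain ⟨g, rfl⟩ := QuotientGroup.mk_surjective c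
      show qSG 𝒢 T O π D b v (Sum.inr ⟨e, QuotientGroup.mk (𝒢.vtxIncl T v γ * g)⟩) = _
      rw [hmk, hmk, map_mul, Equiv.Perm.mul_apply, h1, upE_smul]
  · rintro e (⟨g, u⟩ | ⟨e', c⟩)
    · show D _ (π (𝒢.edgeElt T e * g) (b u)) = _ ∨ D _ (π g (b u)) = _
      rw [map_mul, Equiv.Perm.mul_apply]
      exact h2 e _
    · obtain ⟨g, rfl⟩ := QuotientGroup.mk_surjective c
      show qSG 𝒢 T O π D b _ (Sum.inr ⟨e', QuotientGroup.mk (𝒢.edgeElt T e * g)⟩) = _ ∨ _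
      rw [hmk, hmk, map_mul, Equiv.Perm.mul_apply]
      refine (h2 e (π g (b (G.t e'.1)))).imp (fun h => ?_) (fun h => ?_) <;>
      · rw [h]; exact upE_inr _ _ _ _ rfl
  · rintro v (γ | ⟨⟨e, rfl⟩, x⟩)
    · show D v (π (𝒢.vtxIncl T v γ) (b v)) = _
      rw [h1, hb, smul_inl, mul_one]
    · have hx : Quotient.out x • eB 𝒢 e = Sum.inr ⟨⟨e, rfl⟩, x⟩ := by
        rw [smul_eB, QuotientGroup.out_eq']
      by_cases he : e ∈ O
      · simp only [phiV, he, dite_true]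
        rw [hmk, h1, hb, upE_smul, upE_inl, one_smul, hx]
      · simp only [phiV, he, dite_false]
        rw [hmk, map_mul, Equiv.Perm.mul_apply, h1, upE_smul]
        have := (h2 e (b (G.t (G.bar e)))).resolve_right (by rw [hb]; simp [eB])
        rw [this, upE_inr _ _ _ _ rfl, hx]


section Abstract

variable {V Y : Type*} {A : V → Type*} {C : V → Type*} (Q : ∀ v, C v → Y → A v)

/-- Nondegeneracy of a tuple as seen from `w`. -/
def Nd (n : ℕ) (x : Fin (n + 1) → Y) (w : Σ v, C v) : Prop :=
  Function.Injective (fun i => Q w.1 w.2 (x i))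

/-- Separation property. -/
def SepQ : Prop := ∀ w w' : Σ v, C v, w ≠ w' →
  ∃ (s : A w.1) (s' : A w'.1), ∀ y, Q w.1 w.2 y = s ∨ Q w'.1 w'.2 y = s'

open Classical in
/-- The transfer map. -/
def psiW (n : ℕ) : (∀ v, (Fin (n + 1) → A v) → ℝ) →ₗ[ℝ] ((Fin (n + 1) → Y) → ℝ) where
  toFun f := fun x => if h : ∃ w, Nd Q n x w then
    f h.choose.1 (fun i => Q h.choose.1 h.choose.2 (x i)) else 0
  map_add' f g := by
    funext x
    by_cases h : ∃ w, Nd Q n x w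
    · simp only [Pi.add_apply, dif_pos h]
    · simp only [Pi.add_apply, dif_neg h, add_zero]
  map_smul' r f := by
    funext x
    by_cases h : ∃ w, Nd Q n x w
    · simp only [Pi.smul_apply, dif_pos h, RingHom.id_apply]
    · simp only [Pi.smul_apply, dif_neg h, smul_zero]

variable {Q}

lemma SepQ.unique (hQ : SepQ Q) {n : ℕ} (hn : 2 ≤ n) {x : Fin (n + 1) → Y} {w w' : Σ v, C v}
    (h : Nd Q n x w) (h' : Nd Q n x w') : w = w' := by
  by_contra hne
  obtain ⟨s, s', hs⟩ := hQ w w' hne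
  have k1 : ∀ i j : Fin (n + 1), i ≠ j → Q w.1 w.2 (x i) = s → Q w.1 w.2 (x j) = s → False :=
    fun i j hij a b => hij (h (a.trans b.symm))
  have k2 : ∀ i j : Fin (n + 1), i ≠ j → Q w'.1 w'.2 (x i) = s' →
      Q w'.1 w'.2 (x j) = s' → False :=
    fun i j hij a b => hij (h' (a.trans b.symm))
  let a : Fin (n + 1) := ⟨0, by omega⟩
  let b : Fin (n + 1) := ⟨1, by omega⟩
  let c : Fin (n + 1) := ⟨2, by omega⟩
  have ab : a ≠ b := by simp [a, b]
  have ac : a ≠ c := by simp [a, c]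
  have bc : b ≠ c := by simp [b, c]
  rcases hs (x a) with ha | ha <;> rcases hs (x b) with hb | hb <;>
    rcases hs (x c) with hc | hc
  all_goals first
    | exact k1 a b ab ha hb
    | exact k1 a c ac ha hc
    | exact k1 b c bc hb hc
    | exact k2 a b ab ha hb
    | exact k2 a c ac ha hc
    | exact k2 b c bc hb hc

lemma SepQ.psi_eq (hQ : SepQ Q) {n : ℕ} (hn : 2 ≤ n) {x : Fin (n + 1) → Y} {w : Σ v, C v}
    (h : Nd Q n x w) (f : ∀ v, (Fin (n + 1) → A v) → ℝ) :
    psiW Q n f x = f w.1 (fun i => Q w.1 w.2 (x i)) := by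
  have hex : ∃ w, Nd Q n x w := ⟨w, h⟩
  have : psiW Q n f x = f hex.choose.1 (fun i => Q hex.choose.1 hex.choose.2 (x i)) := dif_pos hex
  rw [this, hQ.unique hn hex.choose_spec h]

lemma psi_zero {n : ℕ} {x : Fin (n + 1) → Y}
    (h : ¬ ∃ w, Nd Q n x w) (f : ∀ v, (Fin (n + 1) → A v) → ℝ) :
    psiW Q n f x = 0 := dif_neg h

lemma SepQ.psi_sum (hQ : SepQ Q) {n : ℕ} (hn : 2 ≤ n) {x : Fin (n + 1) → Y}
    (B : Finset (Σ v, C v)) (hB : ∀ w, Nd Q n x w → w ∈ B)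
    (f : ∀ v, (Fin (n + 1) → A v) → ℝ)
    (hf : ∀ v y, ¬ Function.Injective y → f v y = 0) :
    psiW Q n f x = ∑ w ∈ B, f w.1 (fun i => Q w.1 w.2 (x i)) := by
  by_cases h : ∃ w, Nd Q n x w
  · obtain ⟨w, hw⟩ := h
    rw [hQ.psi_eq hn hw, Finset.sum_eq_single_of_mem w (hB w hw)]
    intro w' _ hne
    exact hf _ _ (fun h' => hne (hQ.unique hn h' hw))
  · rw [psi_zero h, Finset.sum_eq_zero]
    intro w _
    exact hf _ _ (fun h' => h ⟨w, h'⟩)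

lemma SepQ.psi_gcob (hQ : SepQ Q) {n : ℕ} (hn : 2 ≤ n)
    (f : ∀ v, (Fin (n + 1) → A v) → ℝ) (hf : ∀ v, f v ∈ altF (A v) n) :
    psiW Q (n + 1) (fun v => gcob (A v) n (f v)) = gcob Y n (psiW Q n f) := by
  funext x
  have hfin : {w | ∃ i : Fin (n + 2), Nd Q n (x ∘ i.succAbove) w}.Finite := by
    rw [Set.ofPred_exists]
    refine Set.finite_iUnion (fun i => Set.Subsingleton.finite ?_)
    intro w hw w' hw'
    exact hQ.unique hn hw hw'
  have hB : ∀ i : Fin (n + 2), ∀ w, Nd Q n (x ∘ i.succAbove) w → w ∈ hfin.toFinset :=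
    fun i w hw => hfin.mem_toFinset.2 ⟨i, hw⟩
  rw [hQ.psi_sum (by omega) hfin.toFinset
    (fun w hw => hB 0 w (fun i j hij => Fin.succAbove_right_injective (hw hij))) _
    (fun v y hy => gcob_zero_of_not_inj (hf v) hy)]
  show ∑ w ∈ hfin.toFinset, ∑ i : Fin (n + 2), ((-1 : ℝ) ^ (i : ℕ)) *
      f w.1 ((fun i => Q w.1 w.2 (x i)) ∘ i.succAbove) =
    ∑ i : Fin (n + 2), ((-1 : ℝ) ^ (i : ℕ)) * psiW Q n f (x ∘ i.succAbove)
  rw [Finset.sum_comm]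
  refine Finset.sum_congr rfl (fun i _ => ?_)
  rw [← Finset.mul_sum, hQ.psi_sum hn hfin.toFinset (hB i) f
    (fun v y hy => alt_zero_of_not_inj (hf v) hy)]
  rfl

lemma SepQ.psi_alt (hQ : SepQ Q) {n : ℕ} (hn : 2 ≤ n)
    (f : ∀ v, (Fin (n + 1) → A v) → ℝ) (hf : ∀ v, f v ∈ altF (A v) n) :
    psiW Q n f ∈ altF Y n := by
  intro x σ
  by_cases h : ∃ w, Nd Q n x w
  · obtain ⟨w, hw⟩ := h
    have hw' : Nd Q n (x ∘ σ) w := hw.comp σ.injective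
    rw [hQ.psi_eq hn hw, hQ.psi_eq hn hw']
    exact hf w.1 (fun i => Q w.1 w.2 (x i)) σ
  · have h' : ¬ ∃ w, Nd Q n (x ∘ σ) w := by
      rintro ⟨w, hw⟩
      refine h ⟨w, ?_⟩
      have := Function.Injective.comp hw σ.symm.injective
      intro i j hij
      apply this
      simpa using hij
    rw [psi_zero h, psi_zero h', mul_zero]

lemma psi_abs_le {n : ℕ} (f : ∀ v, (Fin (n + 1) → A v) → ℝ) {K : ℝ} (hK : 0 ≤ K)
    (hf : ∀ v y, |f v y| ≤ K) (x : Fin (n + 1) → Y) : |psiW Q n f x| ≤ K := by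
  by_cases h : ∃ w, Nd Q n x w
  · have : psiW Q n f x = f h.choose.1 (fun i => Q h.choose.1 h.choose.2 (x i)) := dif_pos h
    rw [this]
    exact hf _ _
  · rw [psi_zero h, abs_zero]
    exact hK

end Abstract

lemma psi_main {V Y P : Type*} [Finite V] {A C R : V → Type*} [∀ v, Group (R v)]
    [∀ v, MulAction (R v) (A v)] [Group P] [MulAction P Y]
    (Q : ∀ v, C v → Y → A v) (hQ : SepQ Q) (φ : ∀ v, A v → Y)
    (hE : ∀ v (c : C v) (p : P), ∃ (c' : C v) (γ : R v), ∀ y, Q v c (p • y) = γ • Q v c' y)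
    (hR : ∀ v, ∃ (c : C v) (γ : R v), ∀ s, Q v c (φ v s) = γ • s)
    (n : ℕ) (hn : 2 ≤ n) (f : ∀ v, (Fin (n + 1) → A v) → ℝ)
    (hf : ∀ v, f v ∈ altC (R v) (A v) n) :
    psiW Q n f ∈ altC P Y n ∧ supN (psiW Q n f) ≤ (⨆ v, supN (f v)) ∧
    (∀ v, pbSet (φ v) n (psiW Q n f) = f v) ∧
    psiW Q (n + 1) (fun v => gcob (A v) n (f v)) = gcob Y n (psiW Q n f) := by
  have hb : ∀ v, f v ∈ bddF (A v) n := fun v => (hf v).1.1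
  have ha : ∀ v, f v ∈ altF (A v) n := fun v => (hf v).1.2
  have hi : ∀ v, f v ∈ invF (R v) (A v) n := fun v => (hf v).2
  have hK : 0 ≤ ⨆ v, supN (f v) := Real.iSup_nonneg (fun v => supN_nonneg _)
  have hle : ∀ x, |psiW Q n f x| ≤ ⨆ v, supN (f v) := by
    refine psi_abs_le f hK (fun v y => ?_)
    exact (abs_le_supN (hb v) y).trans
      (le_ciSup (f := fun v => supN (f v)) (Set.finite_range _).bddAbove v)
  have halt := hQ.psi_alt hn f ha
  have nd : ∀ (x : Fin (n + 1) → Y) (p : P) (w : Σ v, C v), Nd Q n (fun i => p • x i) w →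
      (∃ w, Nd Q n x w) ∧ psiW Q n f (fun i => p • x i) = psiW Q n f x := by
    rintro x p ⟨v, c⟩ hw
    obtain ⟨c', γ, h⟩ := hE v c p
    have hw' : Nd Q n x ⟨v, c'⟩ := by
      intro i j hij
      apply hw
      simp only [h]
      exact congrArg _ hij
    refine ⟨⟨_, hw'⟩, ?_⟩
    rw [hQ.psi_eq hn hw, hQ.psi_eq hn hw']
    simp only [h]
    exact hi v γ _
  refine ⟨⟨⟨⟨_, hle⟩, halt⟩, ?_⟩, supN_le hK hle, ?_, hQ.psi_gcob hn f ha⟩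
  · intro p x
    by_cases h : ∃ w, Nd Q n (fun i => p • x i) w
    · obtain ⟨w, hw⟩ := h
      exact (nd x p w hw).2
    · rw [psi_zero h, psi_zero]
      rintro ⟨w, hw⟩
      refine h (nd _ p⁻¹ w ?_).1
      simpa using hw
  · intro v
    funext s
    show psiW Q n f (fun i => φ v (s i)) = f v s
    by_cases hs : Function.Injective s
    · obtain ⟨c, γ, h⟩ := hR v
      have hw : Nd Q n (fun i => φ v (s i)) ⟨v, c⟩ := by
        intro i j hij
        simp only [h] at hij
        exact hs (MulAction.injective γ hij)
      rw [hQ.psi_eq hn hw]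
      simp only [h]
      exact hi v γ s
    · rw [alt_zero_of_not_inj (ha v) hs, psi_zero]
      rintro ⟨w, hw⟩
      exact hs (fun i j hij => hw (by simp only [hij]))

lemma main_aux {G : SerreGraph} [Finite G.V] [Finite G.E] (𝒢 : GraphOfGroups G)
    (hcount : ∀ v : G.V, Countable (𝒢.Gv v))
    (T : Set G.E) (hT : G.IsSpanningTree T) (O : Set G.E) (hO : G.IsOrientation O) :
    ∃ ψ : ∀ n : ℕ, (∀ v : G.V, (Fin (n + 1) → 𝒢.Sv v) → ℝ) →ₗ[ℝ]
        ((Fin (n + 1) → 𝒢.SG T O) → ℝ),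
      ∀ n : ℕ, 2 ≤ n →
        ∀ f : ∀ v : G.V, (Fin (n + 1) → 𝒢.Sv v) → ℝ,
          (∀ v : G.V, f v ∈ altC (𝒢.Gv v) (𝒢.Sv v) n) →
            ψ n f ∈ altC (𝒢.pi1 T) (𝒢.SG T O) n ∧
            supN (ψ n f) ≤ (⨆ v : G.V, supN (f v)) ∧
            (∀ v : G.V, pbSet (𝒢.phiV T O hO v) n (ψ n f) = f v) ∧
            ψ (n + 1) (fun v => gcob (𝒢.Sv v) n (f v)) = gcob (𝒢.SG T O) n (ψ n f) := by
  obtain ⟨q, hq, hr⟩ := exists_dir 𝒢 hcount T hT O hO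
  have hequi : ∀ v γ (x : 𝒢.SG T O), q v (𝒢.vtxIncl T v γ • x) = γ • q v x := hq.equi
  let Q : ∀ v, (𝒢.pi1 T ⧸ (𝒢.vtxIncl T v).range) → 𝒢.SG T O → 𝒢.Sv v :=
    fun v c y => q v ((Quotient.out c)⁻¹ • y)
  have hQ : SepQ Q := by
    rintro ⟨v, c⟩ ⟨v', c'⟩ hne
    rcases hq.separation hT (Quotient.out c) v (Quotient.out c') v' with
      ⟨γ, hv, hg⟩ | ⟨s, s', -, -, h⟩
    · exfalso
      subst hv
      apply hne
      congr 1
      rw [← QuotientGroup.out_eq' c, ← QuotientGroup.out_eq' c', QuotientGroup.eq, hg,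
        inv_mul_cancel_left]
      exact ⟨γ, rfl⟩
    · exact ⟨s, s', h⟩
  refine ⟨fun n => psiW Q n, fun n hn f hf => ?_⟩
  refine psi_main (R := 𝒢.Gv) Q hQ (fun v => 𝒢.phiV T O hO v) ?_ ?_ n hn f hf
  · intro v c p
    obtain ⟨⟨k, γ, rfl⟩, hk⟩ :=
      QuotientGroup.mk_out_eq_mul (𝒢.vtxIncl T v).range (p⁻¹ * Quotient.out c)
    refine ⟨QuotientGroup.mk (p⁻¹ * Quotient.out c), γ, fun y => ?_⟩
    show q v _ = γ • q v _
    rw [← hequi, hk, smul_smul, smul_smul]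
    congr 2
    simp
  · intro v
    obtain ⟨⟨k, γ, rfl⟩, hk⟩ := QuotientGroup.mk_out_eq_mul (𝒢.vtxIncl T v).range 1
    refine ⟨QuotientGroup.mk 1, γ⁻¹, fun s => ?_⟩
    show q v _ = _
    rw [hk, one_mul]
    have := hequi v γ⁻¹ (𝒢.phiV T O hO v s)
    rw [map_inv, hr] at this
    exact this


end Helpers

open GraphOfGroups in
/-- **The barycentric retraction (Theorem 4.4 of
Bucher–Burger–Frigerio–Iozzi–Pagliantini–Pozzetti).**
Let `𝒢` be a graph of groups on a finite graph `G` with countable vertex groups and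
amenable edge groups, let `Γ = π₁(𝒢, T)`, let `S_𝒢` and `S_v` be the Bass–Serre amenable
spaces and `φ_v : S_v → S_𝒢` the natural inclusions. Then, in all degrees `n ≥ 2`, there
is a norm non-increasing (partial) chain map
`ψ^n : ⊕_{v ∈ V(G)} ℓ^∞_alt(S_v^{n+1})^{Γ_v} → ℓ^∞_alt(S_𝒢^{n+1})^Γ`
commuting with the coboundary operators, such that `φ^n ∘ ψ^n = id`, where
`φ^n = ⊕_v φ_v^•` is induced by the pullbacks along the `φ_v`. -/
theorem barycentric_retraction_graph_of_groups
    (G : SerreGraph) [Fintype G.V] [Fintype G.E]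
    (𝒢 : GraphOfGroups G)
    (hcount : ∀ v : G.V, Countable (𝒢.Gv v))
    (hamen : ∀ e : G.E, IsAmenable (𝒢.Ge e))
    (T : Set G.E) (hT : G.IsSpanningTree T)
    (O : Set G.E) (hO : G.IsOrientation O) :
    ∃ ψ : ∀ n : ℕ, (∀ v : G.V, (Fin (n + 1) → 𝒢.Sv v) → ℝ) →ₗ[ℝ]
        ((Fin (n + 1) → 𝒢.SG T O) → ℝ),
      ∀ n : ℕ, 2 ≤ n →
        ∀ f : ∀ v : G.V, (Fin (n + 1) → 𝒢.Sv v) → ℝ,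
          (∀ v : G.V, f v ∈ altC (𝒢.Gv v) (𝒢.Sv v) n) →
            ψ n f ∈ altC (𝒢.pi1 T) (𝒢.SG T O) n ∧
            supN (ψ n f) ≤ (⨆ v : G.V, supN (f v)) ∧
            (∀ v : G.V, pbSet (𝒢.phiV T O hO v) n (ψ n f) = f v) ∧
            ψ (n + 1) (fun v => gcob (𝒢.Sv v) n (f v)) = gcob (𝒢.SG T O) n (ψ n f) := by
  exact main_aux 𝒢 hcount T hT O hO

end GrpBC
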